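/- Let ι be an SL instance and Y : J → I any feasible assignment for ι. Then there exists a feasible SL schedule for ι with assignment Y whose makespan is at most max_{i ∈ I} ∑_{j : Y j = i} (p i j + p' i j) + max_{j ∈ J} r j + max_{j ∈ J} ℓ j + max_{j ∈ J} r' j. -/

import Mathlib

/-- Feasibility of an SL schedule `(Y, s, s')` for an SL instance: `Y` respects the
adjacency relation `E` and the memory capacities `M` (w.r.t. demands `d`), the T2 of
client `j` starts no earlier than its release time `r j`, its T4 starts no earlier
than `ℓ j` slots after its T2 completes, and for distinct clients assigned to the
same helper the T2/T4 processing intervals are pairwise disjoint. -/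
def SLFeasible {J I : Type*} [Fintype J] [DecidableEq I]
    (E : J → I → Prop) (M : I → ℕ) (d : J → ℕ) (r ℓ : J → ℕ) (p p' : I → J → ℕ)
    (Y : J → I) (s s' : J → ℕ) : Prop :=
  (∀ j : J, E j (Y j)) ∧
  (∀ i : I, ∑ j ∈ Finset.univ.filter (fun j => Y j = i), d j ≤ M i) ∧
  (∀ j : J, r j ≤ s j) ∧
  (∀ j : J, s j + p (Y j) j + ℓ j ≤ s' j) ∧
  (∀ j j' : J, j ≠ j' → Y j = Y j' →
    Disjoint (Set.Ico (s j) (s j + p (Y j) j))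
      (Set.Ico (s j') (s j' + p (Y j') j')) ∧
    Disjoint (Set.Ico (s j) (s j + p (Y j) j))
      (Set.Ico (s' j') (s' j' + p' (Y j') j')) ∧
    Disjoint (Set.Ico (s' j) (s' j + p' (Y j) j))
      (Set.Ico (s j') (s j' + p (Y j') j')) ∧
    Disjoint (Set.Ico (s' j) (s' j + p' (Y j) j))
      (Set.Ico (s' j') (s' j' + p' (Y j') j')))

/-- The makespan of an SL schedule: the maximum over clients `j` of the completion
time `c j = s' j + p' (Y j) j + r' j`. -/
def SLMakespan {J I : Type*} [Fintype J]
    (r' : J → ℕ) (p' : I → J → ℕ) (Y : J → I) (s' : J → ℕ) : ℕ :=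
  Finset.univ.sup (fun j => s' j + p' (Y j) j + r' j)

/-! Each helper works in two phases. From time `max r` on it runs the T2 tasks of its clients
without idling, so they all end by `max r + ∑ p`; after a pause of `max ℓ` every T4 task is
available, and the T4 tasks are run without idling as well. Hence the helper is done by
`max r + ∑ p + max ℓ + ∑ p'`. -/

lemma disjoint_Ico_of_le {α : Type*} [Preorder α] {a b c d : α} (h : b ≤ c) :
    Disjoint (Set.Ico a b) (Set.Ico c d) :=
  (Set.Iio_disjoint_Ici h).mono Set.Ico_subset_Iio_self Set.Ico_subset_Ici_self

section SerialProcessing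

variable {J T : Type*} [LinearOrder J] [AddCommMonoid T]

/-- The starting time of job `j` when the jobs of `S`, with processing times `w`, are run in
increasing order and without idling from time `0` on. -/
def serialStart (S : Finset J) (w : J → T) (j : J) : T :=
  ∑ k ∈ S with k < j, w k

variable {S : Finset J} {j j' : J}

lemma serialStart_add_eq_sum_filter_le (w : J → T) (hj : j ∈ S) :
    serialStart S w j + w j = ∑ k ∈ S with k ≤ j, w k := by
  have filter_le_eq_cons : {k ∈ S | k ≤ j} = Finset.cons j {k ∈ S | k < j} (by simp) := by
    ext k
    grind
  rw [filter_le_eq_cons, Finset.sum_cons, add_comm, serialStart]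

variable [PartialOrder T] [CanonicallyOrderedAdd T]

lemma serialStart_add_le_sum (w : J → T) (hj : j ∈ S) :
    serialStart S w j + w j ≤ ∑ k ∈ S, w k := by
  rw [serialStart_add_eq_sum_filter_le w hj]
  exact Finset.sum_le_sum_of_subset (Finset.filter_subset _ S)

lemma serialStart_add_le_serialStart (w : J → T) (hj : j ∈ S) (hlt : j < j') :
    serialStart S w j + w j ≤ serialStart S w j' := by
  rw [serialStart_add_eq_sum_filter_le w hj]
  exact Finset.sum_le_sum_of_subset
    (Finset.monotone_filter_right S fun _ _ hk => hk.trans_lt hlt)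

lemma pairwiseDisjoint_Ico_serialStart (S : Finset J) (w : J → T) (t : T) :
    (S : Set J).PairwiseDisjoint
      fun j => Set.Ico (t + serialStart S w j) (t + serialStart S w j + w j) := by
  have disjoint_of_lt {j j' : J} (hj : j ∈ S) (hlt : j < j') :
      Disjoint (Set.Ico (t + serialStart S w j) (t + serialStart S w j + w j))
        (Set.Ico (t + serialStart S w j') (t + serialStart S w j' + w j')) := by
    apply disjoint_Ico_of_le
    rw [add_assoc]
    gcongr
    exact serialStart_add_le_serialStart w hj hlt
  intro j hj j' hj' hne
  rcases hne.lt_or_gt with hlt | hgt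
  · exact disjoint_of_lt hj hlt
  · exact (disjoint_of_lt hj' hgt).symm

end SerialProcessing

section TwoPhaseSchedule

variable {J I : Type*} [Fintype J] [LinearOrder J] [DecidableEq I]

/-- The start of the T2 task of client `j` when every helper runs the T2 tasks of the clients that
`Y` assigns to it without idling from time `R` on. -/
def slT2Start (R : ℕ) (p : I → J → ℕ) (Y : J → I) (j : J) : ℕ :=
  R + serialStart {k | Y k = Y j} (p (Y j)) j

/-- The start of the T4 task of client `j` when every helper, having completed its T2 tasks as in
`slT2Start`, pauses for `L` slots and then runs its T4 tasks without idling. -/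
def slT4Start (R L : ℕ) (p p' : I → J → ℕ) (Y : J → I) (j : J) : ℕ :=
  R + ∑ k with Y k = Y j, p (Y j) k + L + serialStart {k | Y k = Y j} (p' (Y j)) j

variable (R L : ℕ) (p p' : I → J → ℕ) {Y : J → I} {j j' : J}

lemma slT2Start_add_le_slT4Start (hY : Y j = Y j') :
    slT2Start R p Y j + p (Y j) j + L ≤ slT4Start R L p p' Y j' := by
  have t2_done : serialStart {k | Y k = Y j} (p (Y j)) j + p (Y j) j ≤
      ∑ k with Y k = Y j, p (Y j) k :=
    serialStart_add_le_sum _ (by simp)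
  rw [slT2Start, slT4Start, ← hY]
  lia

lemma slT4Start_add_le (Y : J → I) (j : J) :
    slT4Start R L p p' Y j + p' (Y j) j ≤
      ∑ k with Y k = Y j, (p (Y j) k + p' (Y j) k) + R + L := by
  have t4_done : serialStart {k | Y k = Y j} (p' (Y j)) j + p' (Y j) j ≤
      ∑ k with Y k = Y j, p' (Y j) k :=
    serialStart_add_le_sum _ (by simp)
  rw [slT4Start, Finset.sum_add_distrib]
  lia

lemma disjoint_Ico_slT2Start (hne : j ≠ j') (hY : Y j = Y j') :
    Disjoint (Set.Ico (slT2Start R p Y j) (slT2Start R p Y j + p (Y j) j))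
      (Set.Ico (slT2Start R p Y j') (slT2Start R p Y j' + p (Y j') j')) := by
  simp only [slT2Start, ← hY]
  exact pairwiseDisjoint_Ico_serialStart _ _ _ (by simp) (by simp [hY]) hne

lemma disjoint_Ico_slT4Start (hne : j ≠ j') (hY : Y j = Y j') :
    Disjoint (Set.Ico (slT4Start R L p p' Y j) (slT4Start R L p p' Y j + p' (Y j) j))
      (Set.Ico (slT4Start R L p p' Y j') (slT4Start R L p p' Y j' + p' (Y j') j')) := by
  simp only [slT4Start, ← hY]
  exact pairwiseDisjoint_Ico_serialStart _ _ _ (by simp) (by simp [hY]) hne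

lemma disjoint_Ico_slT2Start_slT4Start (hY : Y j = Y j') :
    Disjoint (Set.Ico (slT2Start R p Y j) (slT2Start R p Y j + p (Y j) j))
      (Set.Ico (slT4Start R L p p' Y j') (slT4Start R L p p' Y j' + p' (Y j') j')) :=
  disjoint_Ico_of_le (le_of_add_le_left (slT2Start_add_le_slT4Start R L p p' hY))

variable {R L} {E : J → I → Prop} {M : I → ℕ} {d r ℓ : J → ℕ}

lemma slFeasible_slT2Start_slT4Start (hYE : ∀ j, E j (Y j))
    (hYM : ∀ i, ∑ j with Y j = i, d j ≤ M i) (hr : ∀ j, r j ≤ R) (hℓ : ∀ j, ℓ j ≤ L) :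
    SLFeasible E M d r ℓ p p' Y (slT2Start R p Y) (slT4Start R L p p' Y) := by
  refine ⟨hYE, hYM, fun j => le_add_right (hr j), fun j => ?_, fun j j' hne hY => ⟨?_, ?_, ?_, ?_⟩⟩
  · calc slT2Start R p Y j + p (Y j) j + ℓ j
        ≤ slT2Start R p Y j + p (Y j) j + L := by gcongr; exact hℓ j
      _ ≤ slT4Start R L p p' Y j := slT2Start_add_le_slT4Start R L p p' rfl
  · exact disjoint_Ico_slT2Start R p hne hY
  · exact disjoint_Ico_slT2Start_slT4Start R L p p' hY
  · exact (disjoint_Ico_slT2Start_slT4Start R L p p' hY.symm).symm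
  · exact disjoint_Ico_slT4Start R L p p' hne hY

end TwoPhaseSchedule

/-- Upper-bound lemma for the 5-approximation algorithm: every feasible assignment
`Y` can be completed to a feasible SL schedule whose makespan is at most
`max_{i} ∑_{j : Y j = i} (p i j + p' i j) + max_j r j + max_j ℓ j + max_j r' j`. -/
theorem sl_schedule_from_assignment_upper_bound {J I : Type*}
    [Fintype J] [Fintype I] [Nonempty J] [Nonempty I] [DecidableEq I]
    (E : J → I → Prop) (M : I → ℕ) (d : J → ℕ) (r ℓ r' : J → ℕ)
    (p p' : I → J → ℕ) (Y : J → I)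
    (hYE : ∀ j : J, E j (Y j))
    (hYM : ∀ i : I, ∑ j ∈ Finset.univ.filter (fun j => Y j = i), d j ≤ M i) :
    ∃ s s' : J → ℕ,
      SLFeasible E M d r ℓ p p' Y s s' ∧
      SLMakespan r' p' Y s' ≤
        Finset.univ.sup
          (fun i => ∑ j ∈ Finset.univ.filter (fun j => Y j = i), (p i j + p' i j)) +
        Finset.univ.sup r + Finset.univ.sup ℓ + Finset.univ.sup r' := by
  obtain ⟨_, -⟩ := exists_wellFoundedLT J
  have r_le_sup (j : J) : r j ≤ Finset.univ.sup r := Finset.le_sup (Finset.mem_univ j)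
  have ℓ_le_sup (j : J) : ℓ j ≤ Finset.univ.sup ℓ := Finset.le_sup (Finset.mem_univ j)
  refine ⟨_, _, slFeasible_slT2Start_slT4Start p p' hYE hYM r_le_sup ℓ_le_sup,
    Finset.sup_le fun j _ => ?_⟩
  have load_le_sup : ∑ k with Y k = Y j, (p (Y j) k + p' (Y j) k) ≤
      Finset.univ.sup fun i => ∑ k with Y k = i, (p i k + p' i k) :=
    Finset.le_sup (f := fun i => ∑ k with Y k = i, (p i k + p' i k)) (Finset.mem_univ (Y j))
  have r'_le_sup : r' j ≤ Finset.univ.sup r' := Finset.le_sup (Finset.mem_univ j)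
  grw [slT4Start_add_le, load_le_sup, r'_le_sup]
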